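/- arXiv:1706.01282 — 3 statements merged into one kernel-verified Lean document; each statement's English description precedes it below -/
import Mathlib

section
/- Fix an integer P ≥ 2 and integers p, q ≥ 0. There is a constant C = C(p,q,P) such that for every β > 0, every δ > 0, and all functions f, g : [0,∞) → ℂ, one has ‖f g‖_{β,δ,p+q} ≤ C ‖f‖_{β,δ,p} ‖g‖_{β,δ,q}. -/
open scoped ENNReal

/-- The boundary-layer weight `W_{p,δ}(z) = 1 + Σ_{q=1}^{p} δ^{−q} (1 + (z/δ)^{P−1+q})^{−1}`. -/
noncomputable def wt (P p : ℕ) (δ z : ℝ) : ℝ :=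
  1 + ∑ q ∈ Finset.Icc 1 p, (δ ^ q)⁻¹ * (1 + (z / δ) ^ (P - 1 + q))⁻¹

/-- The boundary-layer norm `‖ω‖_{β,δ,p} = sup_{z≥0} W_{p,δ}(z)^{−1} e^{βz} |ω(z)|`,
valued in `ℝ≥0∞` (it may be infinite). -/
noncomputable def blNorm (P : ℕ) (β δ : ℝ) (p : ℕ) (ω : ℝ → ℂ) : ℝ≥0∞ :=
  ⨆ z : Set.Ici (0:ℝ), ENNReal.ofReal ((wt P p δ z.1)⁻¹ * Real.exp (β * z.1) * ‖ω z.1‖)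

/-!
With `x = z / δ`, the summands `w_0 = 1` and `w_a = δ^{-a} (1 + x^{P-1+a})^{-1}` of the weight are
submultiplicative, `w_a w_b ≤ w_{a+b}`: the power `x^{P-1+a+b}` is at most `x^{P-1+a}` if `x ≤ 1`
and at most `x^{P-1+a} x^{P-1+b}` if `x ≥ 1`. Multiplying out, each of the `p + 1` rows of
`W_p W_q ≤ Σ_a Σ_b w_{a+b}` is part of the sum `W_{p+q}`, so `W_p W_q ≤ (p + 1) W_{p+q}`.
Since `e^{βz} ≤ e^{βz} e^{βz}`, the norm estimate follows pointwise.
-/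

open Finset

section OrderedSemiring

variable {R : Type*} [Semiring R]

lemma one_add_pow_le_mul [LinearOrder R] [IsOrderedRing R] {x : R} (hx : 0 ≤ x) {i j k : ℕ}
    (hik : i ≤ k) (hkij : k ≤ i + j) : 1 + x ^ k ≤ (1 + x ^ i) * (1 + x ^ j) := by
  have hi : 0 ≤ x ^ i := pow_nonneg hx i
  have hj : 0 ≤ x ^ j := pow_nonneg hx j
  have hpow : x ^ k ≤ x ^ i + x ^ (i + j) := by
    rcases le_total x 1 with h | h
    · exact le_add_of_le_of_nonneg (pow_le_pow_of_le_one hx h hik) (pow_nonneg hx _)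
    · exact le_add_of_nonneg_of_le hi (pow_le_pow_right₀ h hkij)
  calc 1 + x ^ k ≤ (1 + x ^ j) + (x ^ i + x ^ (i + j)) :=
        add_le_add (le_add_of_nonneg_right hj) hpow
    _ = (1 + x ^ i) * (1 + x ^ j) := by rw [one_add_mul, mul_one_add, pow_add]

lemma sum_range_mul_sum_range_le_of_submultiplicative [PartialOrder R] [IsOrderedRing R]
    {w : ℕ → R} (hw : ∀ a, 0 ≤ w a) (hmul : ∀ a b, w a * w b ≤ w (a + b)) (p q : ℕ) :
    (∑ a ∈ range (p + 1), w a) * ∑ b ∈ range (q + 1), w b ≤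
      (p + 1) * ∑ c ∈ range (p + q + 1), w c := by
  have hrow : ∀ a ∈ range (p + 1),
      ∑ b ∈ range (q + 1), w (a + b) ≤ ∑ c ∈ range (p + q + 1), w c := by
    intro a ha
    have hsub : Ico a (a + (q + 1)) ⊆ range (p + q + 1) := by
      intro c hc
      simp only [mem_Ico, mem_range] at ha hc ⊢
      lia
    calc ∑ b ∈ range (q + 1), w (a + b) = ∑ c ∈ Ico a (a + (q + 1)), w c := by
          rw [sum_Ico_eq_sum_range, Nat.add_sub_cancel_left]
      _ ≤ ∑ c ∈ range (p + q + 1), w c :=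
          sum_le_sum_of_subset_of_nonneg hsub fun c _ _ => hw c
  calc (∑ a ∈ range (p + 1), w a) * ∑ b ∈ range (q + 1), w b
      = ∑ a ∈ range (p + 1), ∑ b ∈ range (q + 1), w a * w b := sum_mul_sum ..
    _ ≤ ∑ a ∈ range (p + 1), ∑ b ∈ range (q + 1), w (a + b) :=
        sum_le_sum fun a _ => sum_le_sum fun b _ => hmul a b
    _ ≤ ∑ _a ∈ range (p + 1), ∑ c ∈ range (p + q + 1), w c := sum_le_sum hrow
    _ = (p + 1) * ∑ c ∈ range (p + q + 1), w c := by
        rw [sum_const, card_range, nsmul_eq_mul, Nat.cast_succ]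

end OrderedSemiring

section WeightedSupNorm

variable {X A : Type*}

/-- The weighted supremum norm `sup_x u(x) ‖f(x)‖`, valued in `ℝ≥0∞`. It is meant for
nonnegative `u`: points where `u` is negative do not contribute. -/
noncomputable def weightedSupNorm [Norm A] (u : X → ℝ) (f : X → A) : ℝ≥0∞ :=
  ⨆ x, ENNReal.ofReal (u x * ‖f x‖)

lemma ofReal_mul_norm_le_weightedSupNorm [Norm A] (u : X → ℝ) (f : X → A) (x : X) :
    ENNReal.ofReal (u x * ‖f x‖) ≤ weightedSupNorm u f :=
  le_iSup (fun x => ENNReal.ofReal (u x * ‖f x‖)) x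

lemma weightedSupNorm_mul_le [NonUnitalSeminormedRing A] {u v w : X → ℝ} {C : ℝ} (hC : 0 ≤ C)
    (hu : ∀ x, 0 ≤ u x) (hv : ∀ x, 0 ≤ v x) (hw : ∀ x, w x ≤ C * (u x * v x)) (f g : X → A) :
    weightedSupNorm w (f * g) ≤
      ENNReal.ofReal C * weightedSupNorm u f * weightedSupNorm v g := by
  refine iSup_le fun x => ?_
  have hux := hu x
  have hvx := hv x
  have hpoint : w x * ‖f x * g x‖ ≤ C * (u x * ‖f x‖) * (v x * ‖g x‖) :=
    calc w x * ‖f x * g x‖ ≤ C * (u x * v x) * (‖f x‖ * ‖g x‖) := by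
          gcongr
          exacts [hw x, norm_mul_le _ _]
      _ = C * (u x * ‖f x‖) * (v x * ‖g x‖) := by ring
  calc ENNReal.ofReal (w x * ‖f x * g x‖)
      ≤ ENNReal.ofReal (C * (u x * ‖f x‖) * (v x * ‖g x‖)) := ENNReal.ofReal_le_ofReal hpoint
    _ = ENNReal.ofReal C * ENNReal.ofReal (u x * ‖f x‖) * ENNReal.ofReal (v x * ‖g x‖) := by
        rw [ENNReal.ofReal_mul (by positivity), ENNReal.ofReal_mul hC]
    _ ≤ ENNReal.ofReal C * weightedSupNorm u f * weightedSupNorm v g := by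
        gcongr <;> apply ofReal_mul_norm_le_weightedSupNorm

end WeightedSupNorm

section BoundaryLayerWeight

/-- The summands of the boundary-layer weight `W_{p,δ}(z)` for `P = m + 1`, which avoids the
truncated subtraction `P - 1`. The summand of index `0` is the constant `1`, not the value of the
formula for the others. -/
noncomputable def wtTerm (m : ℕ) (δ z : ℝ) : ℕ → ℝ
  | 0 => 1
  | a + 1 => (δ ^ (a + 1))⁻¹ * (1 + (z / δ) ^ (m + (a + 1)))⁻¹

lemma wt_succ_eq_sum_wtTerm (m p : ℕ) (δ z : ℝ) :
    wt (m + 1) p δ z = ∑ a ∈ range (p + 1), wtTerm m δ z a := by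
  rw [sum_range_succ', wt, ← Ico_add_one_right_eq_Icc, sum_Ico_eq_sum_range]
  simp only [wtTerm, Nat.add_sub_cancel, Nat.add_comm 1]
  exact add_comm _ _

variable {δ z : ℝ}

lemma wtTerm_nonneg (hδ : 0 < δ) (hz : 0 ≤ z) (m a : ℕ) : 0 ≤ wtTerm m δ z a := by
  cases a <;> rw [wtTerm] <;> positivity

lemma wtTerm_mul_le (hδ : 0 < δ) (hz : 0 ≤ z) (m a b : ℕ) :
    wtTerm m δ z a * wtTerm m δ z b ≤ wtTerm m δ z (a + b) := by
  rcases a with _ | a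
  · rw [wtTerm, one_mul, zero_add]
  rcases b with _ | b
  · exact (mul_one _).le
  have hx : 0 ≤ z / δ := by positivity
  have hprofile : 1 + (z / δ) ^ (m + (a + 1 + b + 1)) ≤
      (1 + (z / δ) ^ (m + (a + 1))) * (1 + (z / δ) ^ (m + (b + 1))) :=
    one_add_pow_le_mul hx (by lia) (by lia)
  calc wtTerm m δ z (a + 1) * wtTerm m δ z (b + 1)
      = (δ ^ (a + 1 + b + 1))⁻¹ *
          ((1 + (z / δ) ^ (m + (a + 1))) * (1 + (z / δ) ^ (m + (b + 1))))⁻¹ := by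
        rw [wtTerm, wtTerm, add_assoc (a + 1), pow_add δ (a + 1), mul_inv, mul_inv,
          mul_mul_mul_comm]
    _ ≤ (δ ^ (a + 1 + b + 1))⁻¹ * (1 + (z / δ) ^ (m + (a + 1 + b + 1)))⁻¹ := by gcongr
    _ = wtTerm m δ z (a + 1 + (b + 1)) := rfl

lemma wt_pos (hδ : 0 < δ) (hz : 0 ≤ z) (P p : ℕ) : 0 < wt P p δ z := by
  unfold wt
  positivity

lemma wt_mul_wt_le (hδ : 0 < δ) (hz : 0 ≤ z) (m p q : ℕ) :
    wt (m + 1) p δ z * wt (m + 1) q δ z ≤ (p + 1) * wt (m + 1) (p + q) δ z := by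
  simp only [wt_succ_eq_sum_wtTerm]
  exact sum_range_mul_sum_range_le_of_submultiplicative
    (wtTerm_nonneg hδ hz m) (wtTerm_mul_le hδ hz m) p q

end BoundaryLayerWeight

/-- The factor `W_{p,δ}(z)^{-1} e^{βz}` multiplying `|ω(z)|` in the boundary-layer norm. -/
noncomputable def blFactor (P : ℕ) (β δ : ℝ) (p : ℕ) (z : Set.Ici (0 : ℝ)) : ℝ :=
  (wt P p δ z)⁻¹ * Real.exp (β * z)

lemma blNorm_eq_weightedSupNorm (P : ℕ) (β δ : ℝ) (p : ℕ) (ω : ℝ → ℂ) :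
    blNorm P β δ p ω = weightedSupNorm (blFactor P β δ p) fun z => ω z :=
  rfl

lemma blFactor_nonneg (P : ℕ) (β : ℝ) {δ : ℝ} (hδ : 0 < δ) (p : ℕ) (z : Set.Ici (0 : ℝ)) :
    0 ≤ blFactor P β δ p z :=
  mul_nonneg (inv_nonneg.2 (wt_pos hδ z.2 P p).le) (Real.exp_nonneg _)

lemma blFactor_add_le (m p q : ℕ) {β δ : ℝ} (hβ : 0 ≤ β) (hδ : 0 < δ) (z : Set.Ici (0 : ℝ)) :
    blFactor (m + 1) β δ (p + q) z ≤
      (p + 1) * (blFactor (m + 1) β δ p z * blFactor (m + 1) β δ q z) := by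
  have hz : 0 ≤ (z : ℝ) := z.2
  have hWp := wt_pos hδ hz (m + 1) p
  have hWq := wt_pos hδ hz (m + 1) q
  have hWpq := wt_pos hδ hz (m + 1) (p + q)
  have hexp : 1 ≤ Real.exp (β * z) := Real.one_le_exp (mul_nonneg hβ hz)
  have hinv : (wt (m + 1) (p + q) δ z)⁻¹ ≤
      (p + 1) * ((wt (m + 1) p δ z)⁻¹ * (wt (m + 1) q δ z)⁻¹) := by
    rw [← mul_inv, ← div_eq_mul_inv, inv_eq_one_div, div_le_div_iff₀ hWpq (by positivity), one_mul]
    exact wt_mul_wt_le hδ hz m p q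
  calc blFactor (m + 1) β δ (p + q) z
      ≤ (p + 1) * ((wt (m + 1) p δ z)⁻¹ * (wt (m + 1) q δ z)⁻¹) *
          (Real.exp (β * z) * Real.exp (β * z)) := by
        unfold blFactor
        gcongr
        exact le_mul_of_one_le_left (by positivity) hexp
    _ = (p + 1) * (blFactor (m + 1) β δ p z * blFactor (m + 1) β δ q z) := by
        unfold blFactor
        ring

theorem blNorm_mul_general {A : Type*} [NonUnitalSeminormedRing A] (m p q : ℕ) {β δ : ℝ}
    (hβ : 0 ≤ β) (hδ : 0 < δ) (f g : Set.Ici (0 : ℝ) → A) :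
    weightedSupNorm (blFactor (m + 1) β δ (p + q)) (f * g) ≤
      ENNReal.ofReal (p + 1) * weightedSupNorm (blFactor (m + 1) β δ p) f *
        weightedSupNorm (blFactor (m + 1) β δ q) g :=
  weightedSupNorm_mul_le (by positivity) (blFactor_nonneg _ β hδ p) (blFactor_nonneg _ β hδ q)
    (blFactor_add_le m p q hβ hδ) f g

/-- the algebra property `‖fg‖_{β,δ,p+q} ≤ C ‖f‖_{β,δ,p} ‖g‖_{β,δ,q}`
with a constant `C = C(p,q,P)` independent of `β` and `δ`. -/
theorem blNorm_mul (P : ℕ) (hP : 2 ≤ P) (p q : ℕ) :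
    ∃ C : ℝ, 0 < C ∧ ∀ β δ : ℝ, 0 < β → 0 < δ → ∀ f g : ℝ → ℂ,
      blNorm P β δ (p + q) (fun z => f z * g z) ≤
        ENNReal.ofReal C * blNorm P β δ p f * blNorm P β δ q g := by
  obtain ⟨m, rfl⟩ : ∃ m, P = m + 1 := ⟨P - 1, by lia⟩
  refine ⟨p + 1, by positivity, fun β δ hβ hδ f g => ?_⟩
  simp only [blNorm_eq_weightedSupNorm]
  exact blNorm_mul_general m p q hβ.le hδ (fun z => f z) (fun z => g z)
end

section
/- Let β ∈ (0, 1/2). There exists a constant C = C(β) such that for every real α with |α| ≥ 1 and every continuous f : [0,∞) → ℂ with ‖f‖_β := sup_{z≥0} e^{βz}|f(z)| < ∞, the function φ(z) = −(1/(2|α|)) ∫₀^∞ ( e^{−|α||x−z|} − e^{−|α|(x+z)} ) f(x) dx, which is the decaying solution of φ'' − α²φ = f on (0,∞) with φ(0) = 0, satisfies α² ‖φ‖_β + |α| ‖φ'‖_β + ‖φ''‖_β ≤ C ‖f‖_β. In particular the constant C is independent of α. -/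
open scoped ENNReal

/-- The exponentially weighted sup norm `‖g‖_β = sup_{z≥0} e^{βz}|g(z)|`, valued in `ℝ≥0∞`. -/
noncomputable def expNorm (β : ℝ) (g : ℝ → ℂ) : ℝ≥0∞ :=
  ⨆ z : Set.Ici (0:ℝ), ENNReal.ofReal (Real.exp (β * z.1) * ‖g z.1‖)

/-- The Green's function solution
`φ(z) = −(1/(2α)) ∫₀^∞ ( e^{−α|x−z|} − e^{−α(x+z)} ) f(x) dx` of `φ'' − α²φ = f`, `φ(0)=0`. -/
noncomputable def greenSol (α : ℝ) (f : ℝ → ℂ) (z : ℝ) : ℂ :=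
  -(1 / (2 * (α:ℂ))) * ∫ x in Set.Ici (0:ℝ),
    ((Real.exp (-(α * |x - z|)) - Real.exp (-(α * (x + z))) : ℝ) : ℂ) * f x

/-!
Splitting the Green's function integral at `x = z` writes `-2aφ = U + V - e^{-az} V(0)`, where
`U(z) = ∫₀^z e^{-a(z-x)} f(x) dx` and `V(z) = ∫_z^∞ e^{-a(x-z)} f(x) dx` solve `U' = f - aU` and
`V' = aV - f`. Hence `φ'' = a²φ + f`. If `|f| ≤ M e^{-βx}` with `|β| < a`, then comparison with
exponential integrals bounds `U`, `V` and `e^{-az} V(0)` by `M e^{-βz} / (a - |β|)`, so `a²φ` and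
`aφ'` have weighted norm at most `(3/2) M a / (a - |β|)`, and `φ''` follows from the equation. For
`a ≥ α₀ > |β|` the ratio `a / (a - |β|)` is at most `α₀ / (α₀ - |β|)`, uniformly in `a`.
-/

open Real Set MeasureTheory

section ExpIntegrals

variable {E : Type*} [NormedAddCommGroup E] [NormedSpace ℝ E] {a β M z : ℝ} {f : ℝ → E}

lemma hasDerivWithinAt_intervalIntegral_Ici [CompleteSpace E] {c : ℝ}
    (hf : ContinuousOn f (Ici c)) (hz : c ≤ z) :
    HasDerivWithinAt (fun u => ∫ x in c..u, f x) (f z) (Ici c) z := by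
  have hmem : z ∈ Icc c (z + 1) := ⟨hz, by linarith⟩
  have hcont : ContinuousOn f (Icc c (z + 1)) := hf.mono Icc_subset_Ici_self
  have : Fact (z ∈ Icc c (z + 1)) := ⟨hmem⟩
  have hderiv : HasDerivWithinAt (fun u => ∫ x in c..u, f x) (f z) (Icc c (z + 1)) z :=
    intervalIntegral.integral_hasDerivWithinAt_right
      ((hf.mono Icc_subset_Ici_self).intervalIntegrable_of_Icc hz)
      (hcont.stronglyMeasurableAtFilter_nhdsWithin measurableSet_Icc z) (hcont z hmem)
  refine hderiv.mono_of_mem_nhdsWithin ?_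
  rw [← Ici_inter_Iic]
  exact inter_mem_nhdsWithin _ (Iic_mem_nhds (by linarith))

lemma hasDerivWithinAt_integral_Ioi [CompleteSpace E] {c : ℝ}
    (hf : ContinuousOn f (Ici c)) (hint : IntegrableOn f (Ioi c)) (hz : c ≤ z) :
    HasDerivWithinAt (fun u => ∫ x in Ioi u, f x) (-f z) (Ici c) z := by
  have htail : ∀ u ∈ Ici c, ∫ x in Ioi u, f x = (∫ x in Ioi c, f x) - ∫ x in c..u, f x :=
    fun u hu => by rw [← intervalIntegral.integral_Ioi_sub_Ioi hint hu, sub_sub_cancel]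
  exact ((hasDerivWithinAt_intervalIntegral_Ici hf hz).const_sub _).congr htail (htail z hz)

lemma hasDerivAt_exp_mul (c z : ℝ) : HasDerivAt (fun u => exp (c * u)) (c * exp (c * z)) z := by
  simpa [mul_comm] using ((hasDerivAt_id z).const_mul c).exp

/-- The causal convolution `U` of `f` with `e^{-ax}` on the half line, the solution of
`U' + aU = f` with `U(0) = 0`. -/
noncomputable def leftExpIntegral (a : ℝ) (f : ℝ → E) (z : ℝ) : E :=
  ∫ x in (0:ℝ)..z, exp (-a * (z - x)) • f x

/-- The anticausal convolution `V` of `f` with `e^{-ax}`, the decaying solution of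
`V' - aV = -f`. -/
noncomputable def rightExpIntegral (a : ℝ) (f : ℝ → E) (z : ℝ) : E :=
  ∫ x in Ioi z, exp (-a * (x - z)) • f x

lemma leftExpIntegral_eq (a : ℝ) (f : ℝ → E) (z : ℝ) :
    leftExpIntegral a f z = exp (-a * z) • ∫ x in (0:ℝ)..z, exp (a * x) • f x := by
  simp_rw [leftExpIntegral, ← intervalIntegral.integral_smul, smul_smul, ← exp_add]
  ring_nf

lemma rightExpIntegral_eq (a : ℝ) (f : ℝ → E) (z : ℝ) :
    rightExpIntegral a f z = exp (a * z) • ∫ x in Ioi z, exp (-a * x) • f x := by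
  simp_rw [rightExpIntegral, ← integral_smul, smul_smul, ← exp_add]
  congr! 4
  ring

lemma hasDerivWithinAt_leftExpIntegral [CompleteSpace E] (a : ℝ) (hf : ContinuousOn f (Ici 0))
    (hz : 0 ≤ z) :
    HasDerivWithinAt (leftExpIntegral a f) (f z - a • leftExpIntegral a f z) (Ici 0) z := by
  have hint := hasDerivWithinAt_intervalIntegral_Ici (f := fun x => exp (a * x) • f x)
    (by fun_prop) hz
  have hcancel : exp (-a * z) * exp (a * z) = 1 := by rw [← exp_add]; simp
  rw [funext (leftExpIntegral_eq a f)]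
  refine ((hasDerivAt_exp_mul (-a) z).hasDerivWithinAt.smul hint).congr_deriv ?_
  rw [smul_smul, hcancel]
  module

lemma hasDerivWithinAt_rightExpIntegral [CompleteSpace E] (hf : ContinuousOn f (Ici 0))
    (hint : IntegrableOn (fun x => exp (-a * x) • f x) (Ioi 0)) (hz : 0 ≤ z) :
    HasDerivWithinAt (rightExpIntegral a f) (a • rightExpIntegral a f z - f z) (Ici 0) z := by
  have htail := hasDerivWithinAt_integral_Ioi (by fun_prop) hint hz
  have hcancel : exp (a * z) * exp (-a * z) = 1 := by rw [← exp_add]; simp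
  rw [funext (rightExpIntegral_eq a f)]
  refine ((hasDerivAt_exp_mul a z).hasDerivWithinAt.smul htail).congr_deriv ?_
  rw [smul_neg, smul_smul, hcancel]
  module

lemma norm_exp_mul_smul_le {c x : ℝ} {v : E} (hv : ‖v‖ ≤ M * exp (-β * x)) :
    ‖exp (c * x) • v‖ ≤ M * exp ((c - β) * x) :=
  calc ‖exp (c * x) • v‖ = exp (c * x) * ‖v‖ := by rw [norm_smul, norm_of_nonneg (exp_nonneg _)]
    _ ≤ exp (c * x) * (M * exp (-β * x)) := by gcongr
    _ = M * exp ((c - β) * x) := by rw [mul_left_comm, ← exp_add]; ring_nf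

lemma integrableOn_exp_neg_mul_smul (haβ : 0 < a + β) (hf : ContinuousOn f (Ici 0))
    (hM : ∀ x, 0 ≤ x → ‖f x‖ ≤ M * exp (-β * x)) :
    IntegrableOn (fun x => exp (-a * x) • f x) (Ioi 0) := by
  have hdom : IntegrableOn (fun x => M * exp ((-a - β) * x)) (Ioi 0) :=
    (integrableOn_exp_mul_Ioi (by linarith) 0).const_mul M
  have hcont : ContinuousOn (fun x => exp (-a * x) • f x) (Ioi 0) := by
    have := hf.mono Ioi_subset_Ici_self
    fun_prop
  refine hdom.mono' (hcont.aestronglyMeasurable measurableSet_Ioi) ?_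
  exact ae_restrict_of_forall_mem measurableSet_Ioi fun x hx =>
    norm_exp_mul_smul_le (hM x (le_of_lt hx))

lemma norm_leftExpIntegral_le (haβ : 0 < a - β) (hM : ∀ x, 0 ≤ x → ‖f x‖ ≤ M * exp (-β * x))
    (hz : 0 ≤ z) : ‖leftExpIntegral a f z‖ ≤ M / (a - β) * exp (-β * z) := by
  have hM0 : 0 ≤ M := by simpa using (norm_nonneg _).trans (hM 0 le_rfl)
  have hdom : IntegrableOn (fun x => M * exp ((a - β) * x)) (Iic z) :=
    (integrableOn_exp_mul_Iic haβ z).const_mul M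
  have hint : ‖∫ x in (0:ℝ)..z, exp (a * x) • f x‖ ≤ M * (exp ((a - β) * z) / (a - β)) :=
    calc ‖∫ x in (0:ℝ)..z, exp (a * x) • f x‖
        ≤ ∫ x in Ioc 0 z, M * exp ((a - β) * x) := by
          rw [intervalIntegral.integral_of_le hz]
          exact norm_integral_le_of_norm_le (hdom.mono_set Ioc_subset_Iic_self)
            (ae_restrict_of_forall_mem measurableSet_Ioc fun x hx =>
              norm_exp_mul_smul_le (hM x hx.1.le))
      _ ≤ ∫ x in Iic z, M * exp ((a - β) * x) :=
          setIntegral_mono_set hdom (ae_of_all _ fun x => by positivity)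
            Ioc_subset_Iic_self.eventuallyLE
      _ = M * (exp ((a - β) * z) / (a - β)) := by
          rw [integral_const_mul, integral_exp_mul_Iic haβ]
  calc ‖leftExpIntegral a f z‖ = exp (-a * z) * ‖∫ x in (0:ℝ)..z, exp (a * x) • f x‖ := by
        rw [leftExpIntegral_eq, norm_smul, norm_of_nonneg (exp_nonneg _)]
    _ ≤ exp (-a * z) * (M * (exp ((a - β) * z) / (a - β))) := by gcongr
    _ = M / (a - β) * (exp (-a * z) * exp ((a - β) * z)) := by ring
    _ = M / (a - β) * exp (-β * z) := by rw [← exp_add]; ring_nf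

lemma norm_rightExpIntegral_le (haβ : 0 < a + β) (hM : ∀ x, 0 ≤ x → ‖f x‖ ≤ M * exp (-β * x))
    (hz : 0 ≤ z) : ‖rightExpIntegral a f z‖ ≤ M / (a + β) * exp (-β * z) := by
  have hneg : -a - β < 0 := by linarith
  have hint : ‖∫ x in Ioi z, exp (-a * x) • f x‖ ≤ M * (exp ((-a - β) * z) / (a + β)) :=
    calc ‖∫ x in Ioi z, exp (-a * x) • f x‖ ≤ ∫ x in Ioi z, M * exp ((-a - β) * x) :=
          norm_integral_le_of_norm_le ((integrableOn_exp_mul_Ioi hneg z).const_mul M)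
            (ae_restrict_of_forall_mem measurableSet_Ioi fun x hx =>
              norm_exp_mul_smul_le (hM x (hz.trans (le_of_lt hx))))
      _ = M * (exp ((-a - β) * z) / (a + β)) := by
          rw [integral_const_mul, integral_exp_mul_Ioi hneg, ← neg_add', neg_div_neg_eq]
  calc ‖rightExpIntegral a f z‖ = exp (a * z) * ‖∫ x in Ioi z, exp (-a * x) • f x‖ := by
        rw [rightExpIntegral_eq, norm_smul, norm_of_nonneg (exp_nonneg _)]
    _ ≤ exp (a * z) * (M * (exp ((-a - β) * z) / (a + β))) := by gcongr
    _ = M / (a + β) * (exp (a * z) * exp ((-a - β) * z)) := by ring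
    _ = M / (a + β) * exp (-β * z) := by rw [← exp_add]; ring_nf

lemma norm_leftExpIntegral_add_norm_rightExpIntegral_le (haβ : |β| < a)
    (hM : ∀ x, 0 ≤ x → ‖f x‖ ≤ M * exp (-β * x)) (hz : 0 ≤ z) :
    ‖leftExpIntegral a f z‖ + ‖rightExpIntegral a f z‖
      + ‖exp (-a * z) • rightExpIntegral a f 0‖ ≤ 3 * (M / (a - |β|)) * exp (-β * z) := by
  have hM0 : 0 ≤ M := by simpa using (norm_nonneg _).trans (hM 0 le_rfl)
  have hgap : 0 < a - |β| := sub_pos.2 haβ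
  have hsub : a - |β| ≤ a - β := sub_le_sub_left (le_abs_self β) a
  have hadd : a - |β| ≤ a + β := by linarith [neg_abs_le β]
  have hU : ‖leftExpIntegral a f z‖ ≤ M / (a - |β|) * exp (-β * z) :=
    (norm_leftExpIntegral_le (hgap.trans_le hsub) hM hz).trans (by gcongr)
  have hV : ∀ u, 0 ≤ u → ‖rightExpIntegral a f u‖ ≤ M / (a - |β|) * exp (-β * u) :=
    fun u hu => (norm_rightExpIntegral_le (hgap.trans_le hadd) hM hu).trans (by gcongr)
  have hW : ‖exp (-a * z) • rightExpIntegral a f 0‖ ≤ M / (a - |β|) * exp (-β * z) := by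
    have hV0 : ‖rightExpIntegral a f 0‖ ≤ M / (a - |β|) := by simpa using hV 0 le_rfl
    have hβa : β ≤ a := (le_abs_self β).trans haβ.le
    rw [norm_smul, norm_of_nonneg (exp_nonneg _), mul_comm]
    gcongr
  linarith [hV z hz]

lemma intervalIntegrable_exp_neg_mul_abs_sub_smul (a : ℝ) (hf : ContinuousOn f (Ici 0))
    (hz : 0 ≤ z) : IntervalIntegrable (fun x => exp (-(a * |x - z|)) • f x) volume 0 z := by
  have := hf.mono (Icc_subset_Ici_self : Icc 0 z ⊆ Ici 0)
  exact ContinuousOn.intervalIntegrable_of_Icc hz (by fun_prop)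

lemma integrableOn_Ioi_exp_neg_mul_abs_sub_smul
    (hint : IntegrableOn (fun x => exp (-a * x) • f x) (Ioi z)) :
    IntegrableOn (fun x => exp (-(a * |x - z|)) • f x) (Ioi z) := by
  refine IntegrableOn.congr_fun (hint.smul (exp (a * z))) (fun x hx => ?_) measurableSet_Ioi
  simp only [Pi.smul_apply, smul_smul, ← exp_add, abs_of_pos (sub_pos.2 (mem_Ioi.1 hx))]
  ring_nf

lemma integral_exp_neg_mul_abs_sub_smul (hf : ContinuousOn f (Ici 0))
    (hint : IntegrableOn (fun x => exp (-a * x) • f x) (Ioi 0)) (hz : 0 ≤ z) :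
    ∫ x in Ioi 0, exp (-(a * |x - z|)) • f x = leftExpIntegral a f z + rightExpIntegral a f z := by
  rw [← intervalIntegral.integral_interval_add_Ioi'
    (intervalIntegrable_exp_neg_mul_abs_sub_smul a hf hz)
    (integrableOn_Ioi_exp_neg_mul_abs_sub_smul (hint.mono_set (Ioi_subset_Ioi hz)))]
  congr 1
  · refine intervalIntegral.integral_congr fun x hx => ?_
    rw [uIcc_of_le hz] at hx
    simp only [abs_of_nonpos (sub_nonpos.2 hx.2), neg_sub, neg_mul]
  · refine setIntegral_congr_fun measurableSet_Ioi fun x hx => ?_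
    simp only [abs_of_pos (sub_pos.2 (mem_Ioi.1 hx)), neg_mul]

end ExpIntegrals

section GreenSol

variable {a β M z : ℝ} {f : ℝ → ℂ}

lemma greenSol_eq (hf : ContinuousOn f (Ici 0))
    (hint : IntegrableOn (fun x => exp (-a * x) • f x) (Ioi 0)) (hz : 0 ≤ z) :
    greenSol a f z = -(1 / (2 * (a:ℂ))) * (leftExpIntegral a f z + rightExpIntegral a f z
      - exp (-a * z) • rightExpIntegral a f 0) := by
  have hdirect : IntegrableOn (fun x => exp (-(a * |x - z|)) • f x) (Ioi 0) := by
    rw [← Ioc_union_Ioi_eq_Ioi hz]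
    exact (intervalIntegrable_exp_neg_mul_abs_sub_smul a hf hz).1.union
      (integrableOn_Ioi_exp_neg_mul_abs_sub_smul (hint.mono_set (Ioi_subset_Ioi hz)))
  have hkernel : ∀ x, ((exp (-(a * |x - z|)) - exp (-(a * (x + z))) : ℝ) : ℂ) * f x
      = exp (-(a * |x - z|)) • f x - exp (-a * z) • exp (-a * x) • f x := fun x => by
    rw [← Complex.real_smul, sub_smul, smul_smul, ← exp_add]
    ring_nf
  rw [greenSol, integral_Ici_eq_integral_Ioi]
  simp_rw [hkernel]
  rw [integral_sub hdirect (Integrable.fun_smul _ hint), integral_smul,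
    integral_exp_neg_mul_abs_sub_smul hf hint hz]
  simp only [rightExpIntegral, sub_zero]

/-- The derivative `φ'` of `φ = greenSol a f`, written out by differentiating `greenSol_eq`. -/
noncomputable def greenSolDeriv (a : ℝ) (f : ℝ → ℂ) (z : ℝ) : ℂ :=
  1 / 2 * (leftExpIntegral a f z - rightExpIntegral a f z
    - exp (-a * z) • rightExpIntegral a f 0)

lemma hasDerivWithinAt_greenSol (ha : a ≠ 0) (hf : ContinuousOn f (Ici 0))
    (hint : IntegrableOn (fun x => exp (-a * x) • f x) (Ioi 0)) (hz : 0 ≤ z) :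
    HasDerivWithinAt (greenSol a f) (greenSolDeriv a f z) (Ici 0) z := by
  have haC : (a:ℂ) ≠ 0 := mod_cast ha
  have hU := hasDerivWithinAt_leftExpIntegral a hf hz
  have hV := hasDerivWithinAt_rightExpIntegral hf hint hz
  have hW := ((hasDerivAt_exp_mul (-a) z).smul_const (rightExpIntegral a f 0)).hasDerivWithinAt
    (s := Ici 0)
  refine ((((hU.add hV).sub hW).const_mul (-(1 / (2 * (a:ℂ))))).congr_deriv ?_).congr
    (fun u hu => greenSol_eq hf hint hu) (greenSol_eq hf hint hz)
  simp only [greenSolDeriv, Complex.real_smul, Complex.ofReal_mul, Complex.ofReal_neg]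
  field_simp
  ring

lemma hasDerivWithinAt_greenSolDeriv (hf : ContinuousOn f (Ici 0))
    (hint : IntegrableOn (fun x => exp (-a * x) • f x) (Ioi 0)) (hz : 0 ≤ z) :
    HasDerivWithinAt (greenSolDeriv a f) (a ^ 2 * greenSol a f z + f z) (Ici 0) z := by
  have hU := hasDerivWithinAt_leftExpIntegral a hf hz
  have hV := hasDerivWithinAt_rightExpIntegral hf hint hz
  have hW := ((hasDerivAt_exp_mul (-a) z).smul_const (rightExpIntegral a f 0)).hasDerivWithinAt
    (s := Ici 0)
  refine (((hU.sub hV).sub hW).const_mul (1 / 2 : ℂ)).congr_deriv ?_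
  rw [greenSol_eq hf hint hz]
  simp only [Complex.real_smul, Complex.ofReal_mul, Complex.ofReal_neg]
  field_simp
  ring

lemma derivWithin_greenSol (ha : a ≠ 0) (hf : ContinuousOn f (Ici 0))
    (hint : IntegrableOn (fun x => exp (-a * x) • f x) (Ioi 0)) :
    EqOn (derivWithin (greenSol a f) (Ici 0)) (greenSolDeriv a f) (Ici 0) := fun z hz =>
  (hasDerivWithinAt_greenSol ha hf hint hz).derivWithin (uniqueDiffOn_Ici 0 z hz)

lemma derivWithin_derivWithin_greenSol (ha : a ≠ 0) (hf : ContinuousOn f (Ici 0))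
    (hint : IntegrableOn (fun x => exp (-a * x) • f x) (Ioi 0)) :
    EqOn (derivWithin (derivWithin (greenSol a f) (Ici 0)) (Ici 0))
      (fun z => a ^ 2 * greenSol a f z + f z) (Ici 0) := fun z hz => by
  have hφ' := derivWithin_greenSol ha hf hint
  rw [derivWithin_congr hφ' (hφ' hz)]
  exact (hasDerivWithinAt_greenSolDeriv hf hint hz).derivWithin (uniqueDiffOn_Ici 0 z hz)

lemma norm_greenSol_le (haβ : |β| < a) (hf : ContinuousOn f (Ici 0))
    (hM : ∀ x, 0 ≤ x → ‖f x‖ ≤ M * exp (-β * x)) (hz : 0 ≤ z) :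
    ‖greenSol a f z‖ ≤ 3 / 2 * (M / (a * (a - |β|))) * exp (-β * z) := by
  have ha : 0 < a := (abs_nonneg β).trans_lt haβ
  have hint := integrableOn_exp_neg_mul_smul (a := a) (by linarith [neg_abs_le β]) hf hM
  have hcoef : ‖-(1 / (2 * (a:ℂ)))‖ = 1 / (2 * a) := by simp [abs_of_pos ha]
  rw [greenSol_eq hf hint hz, norm_mul, hcoef]
  calc _ ≤ 1 / (2 * a) * (‖leftExpIntegral a f z‖ + ‖rightExpIntegral a f z‖
        + ‖exp (-a * z) • rightExpIntegral a f 0‖) := by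
        gcongr
        exact (norm_sub_le _ _).trans (by gcongr; exact norm_add_le _ _)
    _ ≤ 1 / (2 * a) * (3 * (M / (a - |β|)) * exp (-β * z)) := by
        gcongr
        exact norm_leftExpIntegral_add_norm_rightExpIntegral_le haβ hM hz
    _ = 3 / 2 * (M / (a * (a - |β|))) * exp (-β * z) := by field_simp

lemma norm_greenSolDeriv_le (haβ : |β| < a)
    (hM : ∀ x, 0 ≤ x → ‖f x‖ ≤ M * exp (-β * x)) (hz : 0 ≤ z) :
    ‖greenSolDeriv a f z‖ ≤ 3 / 2 * (M / (a - |β|)) * exp (-β * z) := by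
  have hcoef : ‖(1 / 2 : ℂ)‖ = 1 / 2 := by simp
  rw [greenSolDeriv, norm_mul, hcoef]
  calc _ ≤ 1 / 2 * (‖leftExpIntegral a f z‖ + ‖rightExpIntegral a f z‖
        + ‖exp (-a * z) • rightExpIntegral a f 0‖) := by
        gcongr
        exact (norm_sub_le _ _).trans (by gcongr; exact norm_sub_le _ _)
    _ ≤ 1 / 2 * (3 * (M / (a - |β|)) * exp (-β * z)) := by
        gcongr
        exact norm_leftExpIntegral_add_norm_rightExpIntegral_le haβ hM hz
    _ = 3 / 2 * (M / (a - |β|)) * exp (-β * z) := by ring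

lemma norm_sq_mul_greenSol_add_le (haβ : |β| < a) (hf : ContinuousOn f (Ici 0))
    (hM : ∀ x, 0 ≤ x → ‖f x‖ ≤ M * exp (-β * x)) (hz : 0 ≤ z) :
    ‖a ^ 2 * greenSol a f z + f z‖
      ≤ (a ^ 2 * (3 / 2 * (M / (a * (a - |β|)))) + M) * exp (-β * z) :=
  calc ‖a ^ 2 * greenSol a f z + f z‖ ≤ ‖a ^ 2 * greenSol a f z‖ + ‖f z‖ := norm_add_le _ _
    _ = a ^ 2 * ‖greenSol a f z‖ + ‖f z‖ := by simp
    _ ≤ a ^ 2 * (3 / 2 * (M / (a * (a - |β|))) * exp (-β * z)) + M * exp (-β * z) := by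
        gcongr
        exacts [norm_greenSol_le haβ hf hM hz, hM z hz]
    _ = (a ^ 2 * (3 / 2 * (M / (a * (a - |β|)))) + M) * exp (-β * z) := by ring

end GreenSol

section ExpNorm

variable {β : ℝ}

lemma expNorm_le_ofReal_iff {B : ℝ} {g : ℝ → ℂ} (hB : 0 ≤ B) :
    expNorm β g ≤ ENNReal.ofReal B ↔ ∀ z, 0 ≤ z → ‖g z‖ ≤ B * exp (-β * z) := by
  simp only [expNorm, iSup_le_iff, ENNReal.ofReal_le_ofReal_iff hB, Subtype.forall, mem_Ici]
  refine forall₂_congr fun z _ => ?_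
  rw [neg_mul, exp_neg, ← div_eq_mul_inv, le_div_iff₀' (exp_pos _)]

lemma expNorm_greenSol_add_le {a : ℝ} (haβ : |β| < a) {f : ℝ → ℂ}
    (hf : ContinuousOn f (Ici 0)) :
    ENNReal.ofReal (a ^ 2) * expNorm β (greenSol a f)
        + ENNReal.ofReal a * expNorm β (derivWithin (greenSol a f) (Ici 0))
        + expNorm β (derivWithin (derivWithin (greenSol a f) (Ici 0)) (Ici 0))
      ≤ ENNReal.ofReal (9 / 2 * (a / (a - |β|)) + 1) * expNorm β f := by
  have ha : 0 < a := (abs_nonneg β).trans_lt haβ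
  have hgap : 0 < a - |β| := sub_pos.2 haβ
  rcases eq_or_ne (expNorm β f) ⊤ with htop | hfin
  · rw [htop, ENNReal.mul_top (ENNReal.ofReal_pos.2 (by positivity)).ne']
    exact le_top
  obtain ⟨M, hM0, hnorm⟩ : ∃ M : ℝ, 0 ≤ M ∧ expNorm β f = ENNReal.ofReal M :=
    ⟨_, ENNReal.toReal_nonneg, (ENNReal.ofReal_toReal hfin).symm⟩
  have hM := (expNorm_le_ofReal_iff hM0).1 hnorm.le
  have hint := integrableOn_exp_neg_mul_smul (a := a) (by linarith [neg_abs_le β]) hf hM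
  have hφ : expNorm β (greenSol a f) ≤ ENNReal.ofReal (3 / 2 * (M / (a * (a - |β|)))) :=
    (expNorm_le_ofReal_iff (by positivity)).2 fun z hz => norm_greenSol_le haβ hf hM hz
  have hφ' : expNorm β (derivWithin (greenSol a f) (Ici 0))
      ≤ ENNReal.ofReal (3 / 2 * (M / (a - |β|))) :=
    (expNorm_le_ofReal_iff (by positivity)).2 fun z hz => by
      rw [derivWithin_greenSol ha.ne' hf hint hz]
      exact norm_greenSolDeriv_le haβ hM hz
  have hφ'' : expNorm β (derivWithin (derivWithin (greenSol a f) (Ici 0)) (Ici 0))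
      ≤ ENNReal.ofReal (a ^ 2 * (3 / 2 * (M / (a * (a - |β|)))) + M) :=
    (expNorm_le_ofReal_iff (by positivity)).2 fun z hz => by
      rw [derivWithin_derivWithin_greenSol ha.ne' hf hint hz]
      exact norm_sq_mul_greenSol_add_le haβ hf hM hz
  grw [hφ, hφ', hφ'', hnorm]
  rw [← ENNReal.ofReal_mul (by positivity), ← ENNReal.ofReal_mul (by positivity),
    ← ENNReal.ofReal_mul (by positivity), ← ENNReal.ofReal_add (by positivity) (by positivity),
    ← ENNReal.ofReal_add (by positivity) (by positivity)]
  refine (congrArg ENNReal.ofReal ?_).le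
  field_simp
  ring

theorem elliptic_estimate_exp_general {α₀ : ℝ} (hβ : |β| < α₀) :
    ∃ C : ℝ, 0 < C ∧ ∀ α : ℝ, α₀ ≤ |α| → ∀ f : ℝ → ℂ, ContinuousOn f (Ici 0) →
      ENNReal.ofReal (α ^ 2) * expNorm β (greenSol |α| f)
        + ENNReal.ofReal |α| * expNorm β (derivWithin (greenSol |α| f) (Ici 0))
        + expNorm β (derivWithin (derivWithin (greenSol |α| f) (Ici 0)) (Ici 0))
        ≤ ENNReal.ofReal C * expNorm β f := by
  have hgap : 0 < α₀ - |β| := sub_pos.2 hβ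
  have hα₀ : 0 < α₀ := (abs_nonneg β).trans_lt hβ
  refine ⟨9 / 2 * (α₀ / (α₀ - |β|)) + 1, by positivity, fun α hα f hf => ?_⟩
  have hratio : |α| / (|α| - |β|) ≤ α₀ / (α₀ - |β|) := by
    rw [div_le_div_iff₀ (by linarith) hgap]
    nlinarith [abs_nonneg β]
  rw [← sq_abs α]
  exact (expNorm_greenSol_add_le (hβ.trans_le hα) hf).trans (by gcongr)

end ExpNorm

/-- the weighted elliptic estimate
`α²‖φ‖_β + |α|‖φ'‖_β + ‖φ''‖_β ≤ C‖f‖_β`, with `C = C(β)` independent of `α`, `|α| ≥ 1`. -/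
theorem elliptic_estimate_exp (β : ℝ) (hβ0 : 0 < β) (hβ : β < 1/2) :
    ∃ C : ℝ, 0 < C ∧ ∀ α : ℝ, 1 ≤ |α| → ∀ f : ℝ → ℂ,
      ContinuousOn f (Set.Ici 0) → expNorm β f < ⊤ →
      ENNReal.ofReal (α ^ 2) * expNorm β (greenSol |α| f)
        + ENNReal.ofReal |α| * expNorm β (derivWithin (greenSol |α| f) (Set.Ici 0))
        + expNorm β
            (derivWithin (derivWithin (greenSol |α| f) (Set.Ici 0)) (Set.Ici 0))
        ≤ ENNReal.ofReal C * expNorm β f :=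
  let ⟨C, hC, h⟩ := elliptic_estimate_exp_general (abs_lt.2 ⟨by linarith, by linarith⟩ : |β| < 1)
  ⟨C, hC, fun α hα f hf _ => h α hα f hf⟩
end

section
/- For all real numbers γ' > γ > 0 there exists a constant C = C(γ, γ') such that for every ν ∈ (0,1] and every t > 0, ∫₀^t (√ν (t−s))^{−1/2} · e^{γ ν^{1/4}(t−s)} · √ν · s · e^{γ ν^{1/4} s} ds ≤ C ν^{−1/8} e^{γ' ν^{1/4} t}. -/
/-!
The two exponentials combine to `e^{γν^{1/4}t}`, which leaves an elementary power integral: the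
left-hand side equals `(4/3) ν^{-1/8} x^{3/2} e^{γx}` with `x = ν^{1/4} t`. The power `x^{3/2}` is
absorbed by the exponential gap `e^{(γ' - γ)x}`.
-/

theorem integral_sub_left_rpow_mul_self {p : ℝ} (hp : -1 < p) (t : ℝ) :
    ∫ s in (0:ℝ)..t, (t - s) ^ p * s = t ^ (p + 2) / ((p + 1) * (p + 2)) := by
  have hp₁ : p + 1 ≠ 0 := by linarith
  have hp₂ : p + 1 + 1 ≠ 0 := by linarith
  have rpow_succ {q : ℝ} (hq : q + 1 ≠ 0) (u : ℝ) : u ^ (q + 1) = u ^ q * u := by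
    obtain rfl | hu := eq_or_ne u 0
    · rw [Real.zero_rpow hq, mul_zero]
    · exact Real.rpow_add_one hu q
  calc ∫ s in (0:ℝ)..t, (t - s) ^ p * s
      = ∫ u in (0:ℝ)..t, u ^ p * (t - u) := by
        simpa using intervalIntegral.integral_comp_sub_left
          (fun u : ℝ ↦ u ^ p * (t - u)) (a := 0) (b := t) t
    _ = ∫ u in (0:ℝ)..t, (u ^ p * t - u ^ (p + 1)) := by
        simp only [mul_sub, rpow_succ hp₁]
    _ = t ^ (p + 1) / (p + 1) * t - t ^ (p + 1 + 1) / (p + 1 + 1) := by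
        rw [intervalIntegral.integral_sub
            ((intervalIntegral.intervalIntegrable_rpow' hp).mul_const t)
            (intervalIntegral.intervalIntegrable_rpow' (by linarith)),
          intervalIntegral.integral_mul_const, integral_rpow (.inl hp),
          integral_rpow (.inl (by linarith)), Real.zero_rpow hp₁, Real.zero_rpow hp₂,
          sub_zero, sub_zero]
    _ = t ^ (p + 2) / ((p + 1) * (p + 2)) := by
        rw [show p + 2 = p + 1 + 1 by ring, rpow_succ hp₂]
        field_simp
        ring

theorem integral_duhamel_rpow_exp {p κ t : ℝ} (hp : -1 < p) (hκ : 0 ≤ κ) (ht : 0 ≤ t) (c : ℝ) :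
    ∫ s in (0:ℝ)..t,
        (κ * (t - s)) ^ p * Real.exp (c * (t - s)) * κ * s * Real.exp (c * s) =
      κ ^ (p + 1) * Real.exp (c * t) * (t ^ (p + 2) / ((p + 1) * (p + 2))) := by
  rw [← integral_sub_left_rpow_mul_self hp t, ← intervalIntegral.integral_const_mul]
  refine intervalIntegral.integral_congr fun s hs ↦ ?_
  rw [Set.uIcc_of_le ht] at hs
  have hexp : Real.exp (c * t) = Real.exp (c * (t - s)) * Real.exp (c * s) := by
    rw [← Real.exp_add]; ring_nf
  simp only [Real.mul_rpow hκ (sub_nonneg.2 hs.2),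
    Real.rpow_add_one' hκ (by linarith : p + 1 ≠ 0), hexp]
  ring

theorem integral_duhamel_viscous {ν t : ℝ} (hν : 0 < ν) (ht : 0 ≤ t) (γ : ℝ) :
    ∫ s in (0:ℝ)..t,
        (Real.sqrt ν * (t - s)) ^ (-(1:ℝ)/2) *
          Real.exp (γ * ν ^ ((1:ℝ)/4) * (t - s)) * Real.sqrt ν * s *
          Real.exp (γ * ν ^ ((1:ℝ)/4) * s) =
      4 / 3 * ν ^ (-(1:ℝ)/8) * (ν ^ ((1:ℝ)/4) * t) ^ ((3:ℝ)/2) *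
        Real.exp (γ * ν ^ ((1:ℝ)/4) * t) := by
  have hscale : Real.sqrt ν ^ (-(1:ℝ)/2 + 1) * t ^ (-(1:ℝ)/2 + 2) =
      ν ^ (-(1:ℝ)/8) * (ν ^ ((1:ℝ)/4) * t) ^ ((3:ℝ)/2) := by
    rw [Real.mul_rpow (by positivity) ht, ← Real.rpow_mul hν.le, ← mul_assoc,
      ← Real.rpow_add hν, Real.sqrt_eq_rpow, ← Real.rpow_mul hν.le]
    norm_num
  rw [integral_duhamel_rpow_exp (by norm_num) (Real.sqrt_nonneg ν) ht, mul_assoc (4 / 3 : ℝ),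
    ← hscale]
  ring

theorem duhamel_singular_estimate_general {γ γ' ν t : ℝ} (hγγ' : γ < γ') (hν : 0 < ν)
    (ht : 0 ≤ t) :
    ∫ s in (0:ℝ)..t,
        (Real.sqrt ν * (t - s)) ^ (-(1:ℝ)/2) *
          Real.exp (γ * ν ^ ((1:ℝ)/4) * (t - s)) * Real.sqrt ν * s *
          Real.exp (γ * ν ^ ((1:ℝ)/4) * s) ≤
      4 / 3 * (3 / 2 / (γ' - γ)) ^ ((3:ℝ)/2) * ν ^ (-(1:ℝ)/8) *
        Real.exp (γ' * ν ^ ((1:ℝ)/4) * t) := by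
  rw [integral_duhamel_viscous hν ht, mul_assoc γ, mul_assoc γ']
  set x := ν ^ ((1:ℝ)/4) * t
  have hx : 0 ≤ x := by positivity
  have hgap : 0 < γ' - γ := sub_pos.2 hγγ'
  have habsorb : x ^ ((3:ℝ)/2) ≤
      (3 / 2 / (γ' - γ)) ^ ((3:ℝ)/2) * Real.exp ((γ' - γ) * x) := by
    simpa only [abs_of_nonneg hx, abs_of_pos hgap] using
      ProbabilityTheory.rpow_abs_le_mul_exp_abs x (p := 3 / 2) (by norm_num) hgap.ne'
  calc 4 / 3 * ν ^ (-(1:ℝ)/8) * x ^ ((3:ℝ)/2) * Real.exp (γ * x)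
      ≤ 4 / 3 * ν ^ (-(1:ℝ)/8) *
          ((3 / 2 / (γ' - γ)) ^ ((3:ℝ)/2) * Real.exp ((γ' - γ) * x)) * Real.exp (γ * x) := by
        gcongr
    _ = 4 / 3 * (3 / 2 / (γ' - γ)) ^ ((3:ℝ)/2) * ν ^ (-(1:ℝ)/8) * Real.exp (γ' * x) := by
        rw [show γ' * x = (γ' - γ) * x + γ * x by ring, Real.exp_add]
        ring

/-- the singular Duhamel-type integral estimate
`∫₀^t (√ν(t−s))^{−1/2} e^{γν^{1/4}(t−s)} √ν s e^{γν^{1/4}s} ds ≤ C ν^{−1/8} e^{γ'ν^{1/4}t}`,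
uniformly in `ν ∈ (0,1]` and `t > 0`, for any `γ' > γ > 0`. -/
theorem duhamel_singular_estimate (γ γ' : ℝ) (hγ : 0 < γ) (hγγ' : γ < γ') :
    ∃ C : ℝ, 0 < C ∧ ∀ ν ∈ Set.Ioc (0:ℝ) 1, ∀ t : ℝ, 0 < t →
      (∫ s in (0:ℝ)..t,
          (Real.sqrt ν * (t - s)) ^ (-(1:ℝ)/2) *
            Real.exp (γ * ν ^ ((1:ℝ)/4) * (t - s)) * Real.sqrt ν * s *
            Real.exp (γ * ν ^ ((1:ℝ)/4) * s)) ≤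
        C * ν ^ (-(1:ℝ)/8) * Real.exp (γ' * ν ^ ((1:ℝ)/4) * t) := by
  have hC : 0 < 4 / 3 * (3 / 2 / (γ' - γ)) ^ ((3:ℝ)/2) :=
    mul_pos (by norm_num) (Real.rpow_pos_of_pos (div_pos (by norm_num) (sub_pos.2 hγγ')) _)
  exact ⟨_, hC, fun ν hν t ht ↦ duhamel_singular_estimate_general hγγ' hν.1 ht.le⟩
end
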